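/- For all integers m ≥ 1 and k ≥ 3, there exists a graph G on 2m + ⌊(k−1)/2⌋ − 1 vertices such that G contains no cycle on k vertices as a subgraph and the complement of G contains no matching of m edges. (Explicitly, one may take the complement of G to be a clique on 2m−1 vertices together with ⌊(k−1)/2⌋ isolated vertices.) -/

import Mathlib

/-- `G` has a copy in `C`: there is an injective graph homomorphism from `G` to `C`,
i.e. `C` contains `G` as a (not necessarily induced) subgraph. -/
def HasCopy {α β : Type*} (G : SimpleGraph α) (C : SimpleGraph β) : Prop :=
  ∃ f : G →g C, Function.Injective f

/-- The Ramsey number `R(G, H)`: the least `N` such that every red-blue colouring of the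
edges of `K_N` (encoded by the graph `C` of red edges) contains a red copy of `G` or a
blue copy of `H`. -/
noncomputable def ramseyNumber {α β : Type*} (G : SimpleGraph α) (H : SimpleGraph β) : ℕ :=
  sInf {N : ℕ | ∀ C : SimpleGraph (Fin N), HasCopy G C ∨ HasCopy H Cᶜ}


/-- The matching `m·K₂`: `m` pairwise vertex-disjoint edges. -/
def matchingGraph (m : ℕ) : SimpleGraph (Fin m × Fin 2) where
  Adj a b := a.1 = b.1 ∧ a.2 ≠ b.2
  symm := ⟨fun _ _ h => ⟨h.1.symm, h.2.symm⟩⟩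
  loopless := ⟨fun _ h => h.2 rfl⟩

/-!
Let `G` be the join of an independent set of `2m - 1` vertices and a clique `s` of `⌊(k - 1) / 2⌋`
vertices. Every edge of `G` meets `s`, whereas a vertex cover of `C_k` has at least `k / 2`
vertices, so `G` contains no `C_k`. Every edge of the complement lies within the `2m - 1` vertices
outside `s`, whereas the edges of an `m`-matching span `2m` vertices.
-/

section

open SimpleGraph

variable {V W : Type*} {G : SimpleGraph V} {H : SimpleGraph W}

theorem hasCopy_iff_isContained : HasCopy G H ↔ G ⊑ H :=
  ⟨fun ⟨f, hf⟩ ↦ ⟨f.toCopy hf⟩, fun ⟨f⟩ ↦ ⟨f.toHom, f.injective⟩⟩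

theorem encard_support_le_of_isContained (h : G ⊑ H) : G.support.encard ≤ H.support.encard := by
  obtain ⟨f⟩ := h
  have image_subset : f '' G.support ⊆ H.support := by
    rintro _ ⟨v, ⟨w, hvw⟩, rfl⟩
    exact ⟨f w, f.toHom.map_adj hvw⟩
  exact f.injective.encard_image G.support ▸ Set.encard_le_encard image_subset

theorem card_le_two_mul_vertexCoverNum {σ : V → V} (hσ : σ.Injective) (hadj : ∀ v, G.Adj v (σ v)) :
    ENat.card V ≤ 2 * G.vertexCoverNum := by
  obtain ⟨c, hcard, hc⟩ := G.vertexCoverNum_exists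
  have cover : Set.univ ⊆ c ∪ σ ⁻¹' c := fun v _ ↦ hc (hadj v)
  calc ENat.card V = (Set.univ : Set V).encard := (Set.encard_univ V).symm
    _ ≤ (c ∪ σ ⁻¹' c).encard := Set.encard_le_encard cover
    _ ≤ c.encard + (σ ⁻¹' c).encard := Set.encard_union_le _ _
    _ ≤ c.encard + c.encard := by
      rw [← hσ.encard_image (σ ⁻¹' c)]
      gcongr
      exact Set.image_preimage_subset σ c
    _ = 2 * G.vertexCoverNum := by rw [hcard, two_mul]

theorem le_two_mul_vertexCoverNum_cycleGraph {k : ℕ} (hk : 2 ≤ k) :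
    k ≤ 2 * (cycleGraph k).vertexCoverNum := by
  obtain ⟨n, rfl⟩ := Nat.exists_eq_add_of_le' hk
  have adj_add_one (i : Fin (n + 2)) : (cycleGraph (n + 2)).Adj i (i + 1) :=
    cycleGraph_adj.mpr (.inr (add_sub_cancel_left i 1))
  simpa using card_le_two_mul_vertexCoverNum (add_left_injective 1) adj_add_one

theorem support_matchingGraph (m : ℕ) : (matchingGraph m).support = Set.univ :=
  Set.eq_univ_of_forall fun ⟨i, b⟩ ↦ ⟨(i, b + 1), rfl, by simp⟩

theorem encard_support_matchingGraph (m : ℕ) : (matchingGraph m).support.encard = 2 * m := by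
  simp [support_matchingGraph, mul_comm]

/-- The complete split graph with clique `s` and independent set `sᶜ`: two distinct vertices are
adjacent as soon as one of them lies in `s`. -/
def completeSplitGraph (s : Set V) : SimpleGraph V :=
  fromRel fun v _ ↦ v ∈ s

variable {s : Set V}

theorem isVertexCover_completeSplitGraph : (completeSplitGraph s).IsVertexCover s :=
  fun _ _ h ↦ h.2

theorem support_compl_completeSplitGraph_subset : (completeSplitGraph s)ᶜ.support ⊆ sᶜ :=
  fun _ ⟨_, hne, hnadj⟩ hv ↦ hnadj ⟨hne, .inl hv⟩

theorem not_isContained_completeSplitGraph (hs : s.encard < H.vertexCoverNum) :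
    ¬ H ⊑ completeSplitGraph s := fun h ↦
  hs.not_ge <| h.vertexCoverNum_le_vertexCoverNum.trans
    isVertexCover_completeSplitGraph.vertexCoverNum_le

theorem not_isContained_compl_completeSplitGraph (hs : sᶜ.encard < H.support.encard) :
    ¬ H ⊑ (completeSplitGraph s)ᶜ := fun h ↦
  hs.not_ge <| (encard_support_le_of_isContained h).trans
    (Set.encard_le_encard support_compl_completeSplitGraph_subset)

end

theorem stmt_9 (m k : ℕ) (hm : 1 ≤ m) (hk : 3 ≤ k) :
    ∃ G : SimpleGraph (Fin (2 * m + (k - 1) / 2 - 1)),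
      ¬ HasCopy (SimpleGraph.cycleGraph k) G ∧ ¬ HasCopy (matchingGraph m) Gᶜ := by
  obtain ⟨s, -, hs⟩ := Finset.exists_subset_card_eq
    (s := (Finset.univ : Finset (Fin (2 * m + (k - 1) / 2 - 1)))) (n := (k - 1) / 2)
    (by rw [Finset.card_fin]; omega)
  have hs_compl : sᶜ.card = 2 * m - 1 := by
    rw [Finset.card_compl, Fintype.card_fin, hs]
    omega
  refine ⟨completeSplitGraph (s : Set _), ?_, ?_⟩ <;> rw [hasCopy_iff_isContained]
  · refine not_isContained_completeSplitGraph (lt_of_mul_lt_mul_left' (a := 2) ?_)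
    calc _ = ((2 * ((k - 1) / 2) : ℕ) : ℕ∞) := by
          rw [Set.encard_coe_eq_coe_finsetCard, hs, Nat.cast_mul, Nat.cast_ofNat]
      _ < k := by exact_mod_cast (by omega : 2 * ((k - 1) / 2) < k)
      _ ≤ 2 * (SimpleGraph.cycleGraph k).vertexCoverNum :=
          le_two_mul_vertexCoverNum_cycleGraph (by omega)
  · apply not_isContained_compl_completeSplitGraph
    rw [← Finset.coe_compl, Set.encard_coe_eq_coe_finsetCard, hs_compl,
      encard_support_matchingGraph]
    exact_mod_cast (by omega : 2 * m - 1 < 2 * m)
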